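/- arXiv:1702.04834 — 2 statements merged into one kernel-verified Lean document; each statement's English description precedes it below -/
import Mathlib

section
/- Lemma 4, part (ii): Let N, K, F be positive integers, M ≥ 0 a real, W_1,…,W_N i.i.d. uniform on {1,…,2^F}, V_k = g_k(W_1,…,W_N) for k ∈ {1,…,K} where each g_k maps into a set of size at most ⌊2^{F·M}⌋, and let D = (D_1,…,D_K) be uniformly distributed on {1,…,N}^K, independent of (W_1,…,W_N). Fix ℓ ∈ {1,…,K} and for k ∈ {1,…,ℓ} define β_k := (1/F)·I(W_{D_k}; V_1,…,V_k | W_{D_1},…,W_{D_{k−1}}, D). Then ∑_{k=1}^{ℓ} β_k ≤ N·(1 − (1 − 1/N)^ℓ)·(ℓ·M/N). -/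
/-- Probability that the discrete random variable `X` (on finite space `Ω` with
probability mass function `p`) takes the value `x`. -/
noncomputable def pr {Ω : Type*} [Fintype Ω] {α : Type*} [DecidableEq α]
    (p : Ω → ℝ) (X : Ω → α) (x : α) : ℝ :=
  ∑ ω ∈ Finset.univ.filter (fun ω => X ω = x), p ω

/-- Shannon entropy (base 2) of the discrete random variable `X`. -/
noncomputable def ent {Ω : Type*} [Fintype Ω] {α : Type*} [DecidableEq α]
    (p : Ω → ℝ) (X : Ω → α) : ℝ :=
  -∑ x ∈ Finset.univ.image X, pr p X x * Real.logb 2 (pr p X x)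

/-- Conditional mutual information `I(X;Y|Z) = H(X,Z) + H(Y,Z) − H(X,Y,Z) − H(Z)`
(base 2). -/
noncomputable def cmi {Ω : Type*} [Fintype Ω] {α β γ : Type*}
    [DecidableEq α] [DecidableEq β] [DecidableEq γ]
    (p : Ω → ℝ) (X : Ω → α) (Y : Ω → β) (Z : Ω → γ) : ℝ :=
  ent p (fun ω => (X ω, Z ω)) + ent p (fun ω => (Y ω, Z ω))
    - ent p (fun ω => (X ω, Y ω, Z ω)) - ent p Z

section helpers
variable {Ω : Type*} [Fintype Ω]

lemma hp_sum {α : Type*} [DecidableEq α] (p : Ω → ℝ) (X : Ω → α) (f : α → ℝ)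
    (T : Finset α) (hT : ∀ ω, X ω ∈ T) :
    ∑ ω, p ω * f (X ω) = ∑ x ∈ T, pr p X x * f x := by
  rw [← Finset.sum_fiberwise_of_maps_to (s := Finset.univ) (t := T) (g := X) (fun ω _ => hT ω)]
  refine Finset.sum_congr rfl fun x _ => ?_
  rw [pr, Finset.sum_mul]
  refine Finset.sum_congr rfl fun ω hω => ?_
  rw [(Finset.mem_filter.1 hω).2]

lemma hp_ent {α : Type*} [DecidableEq α] (p : Ω → ℝ) (X : Ω → α) :
    ent p X = -∑ ω, p ω * Real.logb 2 (pr p X (X ω)) := by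
  rw [ent, hp_sum p X (fun x => Real.logb 2 (pr p X x)) (Finset.univ.image X) (by simp)]

lemma hp_pr_congr {α β : Type*} [DecidableEq α] [DecidableEq β] (p : Ω → ℝ) (X : Ω → α) (Y : Ω → β)
    (h : ∀ a b, X a = X b ↔ Y a = Y b) (ω : Ω) : pr p X (X ω) = pr p Y (Y ω) := by
  unfold pr
  congr 1
  ext a
  simp [h]

lemma hp_congr {α β : Type*} [DecidableEq α] [DecidableEq β] (p : Ω → ℝ) (X : Ω → α) (Y : Ω → β)
    (h : ∀ a b, X a = X b ↔ Y a = Y b) : ent p X = ent p Y := by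
  rw [hp_ent, hp_ent]
  simp_rw [hp_pr_congr p X Y h]

lemma hp_pr_nonneg {α : Type*} [DecidableEq α] (p : Ω → ℝ) (hp : ∀ ω, 0 < p ω) (X : Ω → α) (x : α) :
    0 ≤ pr p X x := Finset.sum_nonneg fun ω _ => (hp ω).le

lemma hp_pr_pos {α : Type*} [DecidableEq α] (p : Ω → ℝ) (hp : ∀ ω, 0 < p ω) (X : Ω → α) (ω : Ω) :
    0 < pr p X (X ω) := by
  unfold pr
  exact Finset.sum_pos (fun ω _ => hp ω) ⟨ω, by simp⟩

lemma hp_ent_le {α : Type*} [DecidableEq α] (p : Ω → ℝ) (hp : ∀ ω, 0 < p ω) (h1 : ∑ ω, p ω = 1)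
    (X : Ω → α) (T : Finset α) (hT : ∀ ω, X ω ∈ T) (c : ℝ) (hc : (T.card : ℝ) ≤ c) (hc0 : 0 < c) :
    ent p X ≤ Real.logb 2 c := by
  have hl : 0 < Real.log 2 := Real.log_pos (by norm_num)
  have key : ∑ ω, p ω * (1 / (c * pr p X (X ω))) ≤ 1 := by
    rw [hp_sum p X (fun x => 1 / (c * pr p X x)) T hT]
    calc _ ≤ ∑ x ∈ T, 1 / c := by
          refine Finset.sum_le_sum fun x _ => ?_
          rcases (hp_pr_nonneg p hp X x).eq_or_lt with h | h
          · rw [← h]; simp; positivity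
          · apply le_of_eq; field_simp
      _ ≤ 1 := by
          rw [Finset.sum_const, nsmul_eq_mul, mul_one_div, div_le_one hc0]; exact hc
  have h2 : ent p X - Real.logb 2 c = (∑ ω, p ω * Real.log (1 / (c * pr p X (X ω)))) / Real.log 2 := by
    have : Real.logb 2 c = ∑ ω, p ω * Real.logb 2 c := by rw [← Finset.sum_mul, h1, one_mul]
    rw [hp_ent, this, ← Finset.sum_neg_distrib, ← Finset.sum_sub_distrib, Finset.sum_div]
    refine Finset.sum_congr rfl fun ω _ => ?_
    have := hp_pr_pos p hp X ω
    rw [one_div, Real.log_inv, Real.log_mul hc0.ne' this.ne', Real.logb, Real.logb]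
    ring
  have h3 : ∑ ω, p ω * Real.log (1 / (c * pr p X (X ω))) ≤ 0 := by
    calc _ ≤ ∑ ω, p ω * (1 / (c * pr p X (X ω)) - 1) := by
          refine Finset.sum_le_sum fun ω _ => mul_le_mul_of_nonneg_left ?_ (hp ω).le
          have := hp_pr_pos p hp X ω
          exact Real.log_le_sub_one_of_pos (by positivity)
      _ ≤ 0 := by
          simp_rw [mul_sub, Finset.sum_sub_distrib, mul_one, h1]
          linarith
  have := div_nonpos_of_nonpos_of_nonneg h3 hl.le
  linarith

lemma hp_marg {α β : Type*} [DecidableEq α] [DecidableEq β] [Fintype α] (p : Ω → ℝ)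
    (X : Ω → α) (Y : Ω → β) (y : β) :
    ∑ x, pr p (fun ω => (X ω, Y ω)) (x, y) = pr p Y y := by
  unfold pr
  rw [← Finset.sum_fiberwise (Finset.univ.filter fun ω => Y ω = y) X]
  refine Finset.sum_congr rfl fun x _ => ?_
  rw [Finset.filter_filter]
  refine Finset.sum_congr ?_ fun _ _ => rfl
  ext ω
  simp [and_comm]

lemma hp_cmi_nonneg {α β γ : Type*} [DecidableEq α] [DecidableEq β] [DecidableEq γ]
    [Fintype α] [Fintype β] [Fintype γ]
    (p : Ω → ℝ) (hp : ∀ ω, 0 < p ω) (h1 : ∑ ω, p ω = 1) (X : Ω → α) (Y : Ω → β) (Z : Ω → γ) :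
    0 ≤ cmi p X Y Z := by
  have hl : 0 < Real.log 2 := Real.log_pos (by norm_num)
  let a : γ → ℝ := pr p Z
  let b : α × γ → ℝ := pr p (fun ω => (X ω, Z ω))
  let c : β × γ → ℝ := pr p (fun ω => (Y ω, Z ω))
  let e : α × β × γ → ℝ := pr p (fun ω => (X ω, Y ω, Z ω))
  have ha0 : ∀ z, 0 ≤ a z := hp_pr_nonneg p hp _
  have hb0 : ∀ z, 0 ≤ b z := hp_pr_nonneg p hp _
  have hc0 : ∀ z, 0 ≤ c z := hp_pr_nonneg p hp _
  have he0 : ∀ z, 0 ≤ e z := hp_pr_nonneg p hp _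
  have ha : ∀ ω, 0 < a (Z ω) := hp_pr_pos p hp Z
  have hb : ∀ ω, 0 < b (X ω, Z ω) := hp_pr_pos p hp (fun ω => (X ω, Z ω))
  have hc : ∀ ω, 0 < c (Y ω, Z ω) := hp_pr_pos p hp (fun ω => (Y ω, Z ω))
  have he : ∀ ω, 0 < e (X ω, Y ω, Z ω) := hp_pr_pos p hp (fun ω => (X ω, Y ω, Z ω))
  have ha1 : ∑ z, a z = 1 := by
    have := hp_sum p Z (fun _ => 1) Finset.univ (by simp)
    simp only [mul_one, h1] at this
    exact this.symm
  let f : α × β × γ → ℝ := fun t => b (t.1, t.2.2) * c t.2 / (e t * a t.2.2)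
  have key : ∑ ω, p ω * f (X ω, Y ω, Z ω) ≤ 1 := by
    rw [hp_sum p (fun ω => (X ω, Y ω, Z ω)) f Finset.univ (by simp)]
    calc _ ≤ ∑ t : α × β × γ, b (t.1, t.2.2) * c t.2 / a t.2.2 := by
          refine Finset.sum_le_sum fun t _ => ?_
          change e t * (b (t.1, t.2.2) * c t.2 / (e t * a t.2.2)) ≤ _
          rcases (he0 t).eq_or_lt with h | h
          · rw [← h, zero_mul]
            exact div_nonneg (mul_nonneg (hb0 _) (hc0 _)) (ha0 _)
          · apply le_of_eq
            rw [← mul_div_assoc, mul_div_mul_left _ _ h.ne']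
      _ = ∑ z, ∑ y, ∑ x, b (x, z) * c (y, z) / a z := by
          rw [Fintype.sum_prod_type_right, Fintype.sum_prod_type_right]
      _ = ∑ z, a z := by
          refine Finset.sum_congr rfl fun z _ => ?_
          have e1 : ∑ x, b (x, z) = a z := hp_marg p X Z z
          have e2 : ∑ y, c (y, z) = a z := hp_marg p Y Z z
          simp_rw [← Finset.sum_div, ← Finset.sum_mul, ← Finset.mul_sum]
          rw [e1, e2, mul_self_div_self]
      _ ≤ 1 := ha1.le
  have h2 : cmi p X Y Z = -(∑ ω, p ω * Real.log (f (X ω, Y ω, Z ω))) / Real.log 2 := by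
    rw [cmi, hp_ent, hp_ent, hp_ent, hp_ent]
    simp only [← Finset.sum_neg_distrib, ← Finset.sum_add_distrib, ← Finset.sum_sub_distrib,
      Finset.sum_div]
    refine Finset.sum_congr rfl fun ω _ => ?_
    change -(p ω * Real.logb 2 (b (X ω, Z ω))) + -(p ω * Real.logb 2 (c (Y ω, Z ω))) -
      -(p ω * Real.logb 2 (e (X ω, Y ω, Z ω))) - -(p ω * Real.logb 2 (a (Z ω))) =
      -(p ω * Real.log (b (X ω, Z ω) * c (Y ω, Z ω) / (e (X ω, Y ω, Z ω) * a (Z ω)))) / Real.log 2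
    rw [Real.log_div (mul_pos (hb ω) (hc ω)).ne' (mul_pos (he ω) (ha ω)).ne',
      Real.log_mul (hb ω).ne' (hc ω).ne', Real.log_mul (he ω).ne' (ha ω).ne']
    simp only [Real.logb]
    ring
  have h3 : ∑ ω, p ω * Real.log (f (X ω, Y ω, Z ω)) ≤ 0 := by
    calc _ ≤ ∑ ω, p ω * (f (X ω, Y ω, Z ω) - 1) := by
          refine Finset.sum_le_sum fun ω _ => mul_le_mul_of_nonneg_left ?_ (hp ω).le
          exact Real.log_le_sub_one_of_pos
            (div_pos (mul_pos (hb ω) (hc ω)) (mul_pos (he ω) (ha ω)))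
      _ ≤ 0 := by
          simp_rw [mul_sub, Finset.sum_sub_distrib, mul_one, h1]
          linarith
  rw [h2]
  exact div_nonneg (by linarith) hl.le

lemma hp_ent_prod {A B σ τ : Type*} [Fintype A] [Fintype B] [Nonempty A] [Nonempty B]
    [DecidableEq σ] [DecidableEq τ] (T : A × B → τ) (Y : B → A → σ)
    (h : ∀ ω ω' : A × B, T ω = T ω' ↔ (ω.2 = ω'.2 ∧ Y ω.2 ω.1 = Y ω.2 ω'.1)) :
    ent (fun _ : A × B => (1 : ℝ) / (Fintype.card (A × B) : ℝ)) T =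
      1 / (Fintype.card B : ℝ) * ∑ b, ent (fun _ : A => (1 : ℝ) / (Fintype.card A : ℝ)) (Y b)
        + Real.logb 2 (Fintype.card B) := by
  classical
  have hA : (0 : ℝ) < Fintype.card A := by exact_mod_cast Fintype.card_pos
  have hB : (0 : ℝ) < Fintype.card B := by exact_mod_cast Fintype.card_pos
  have hpr : ∀ a b, pr (fun _ : A × B => (1 : ℝ) / (Fintype.card (A × B) : ℝ)) T (T (a, b)) =
      pr (fun _ : A => (1 : ℝ) / (Fintype.card A : ℝ)) (Y b) (Y b a) / Fintype.card B := by
    intro a b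
    unfold pr
    have : (Finset.univ.filter fun ω => T ω = T (a, b)) =
        (Finset.univ.filter fun a' => Y b a' = Y b a).map ⟨fun a' => (a', b), fun x y hxy => by simpa using hxy⟩ := by
      ext ⟨a', b'⟩
      simp only [Finset.mem_filter, Finset.mem_univ, true_and, h, Finset.mem_map,
        Function.Embedding.coeFn_mk, Prod.mk.injEq]
      constructor
      · rintro ⟨rfl, h2⟩
        exact ⟨a', h2, rfl⟩
      · rintro ⟨x, h2, hx⟩
        obtain ⟨rfl, rfl⟩ := Prod.mk.inj hx
        exact ⟨rfl, h2⟩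
    rw [this, Finset.sum_map, Finset.sum_const, Finset.sum_const, Fintype.card_prod]
    push_cast
    simp only [nsmul_eq_mul]
    field_simp
  have hpos : ∀ a b, 0 < pr (fun _ : A => (1 : ℝ) / (Fintype.card A : ℝ)) (Y b) (Y b a) :=
    fun a b => hp_pr_pos _ (fun _ => by positivity) _ _
  rw [hp_ent, Fintype.sum_prod_type_right]
  simp_rw [hpr, hp_ent, Real.logb_div (hpos _ _).ne' hB.ne', Fintype.card_prod]
  push_cast
  simp_rw [mul_sub, Finset.sum_sub_distrib, ← Finset.mul_sum, Finset.sum_const, Finset.card_univ,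
    nsmul_eq_mul, Finset.sum_neg_distrib, ← Finset.mul_sum]
  field_simp
  ring

lemma hp_cmi_prod {A B α β γ : Type*} [Fintype A] [Fintype B] [Nonempty A] [Nonempty B]
    [DecidableEq B] [DecidableEq α] [DecidableEq β] [DecidableEq γ]
    (X : A × B → α) (Y : A × B → β) (Z : A × B → γ) :
    cmi (fun _ : A × B => (1 : ℝ) / (Fintype.card (A × B) : ℝ)) X Y (fun ω => (Z ω, ω.2)) =
      1 / (Fintype.card B : ℝ) * ∑ b, cmi (fun _ : A => (1 : ℝ) / (Fintype.card A : ℝ))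
        (fun a => X (a, b)) (fun a => Y (a, b)) (fun a => Z (a, b)) := by
  unfold cmi
  rw [hp_ent_prod _ (fun b a => (X (a, b), Z (a, b))), hp_ent_prod _ (fun b a => (Y (a, b), Z (a, b))),
    hp_ent_prod _ (fun b a => (X (a, b), Y (a, b), Z (a, b))), hp_ent_prod _ (fun b a => Z (a, b))]
  · simp_rw [Finset.sum_sub_distrib, Finset.sum_add_distrib]
    ring
  all_goals
    rintro ⟨a, b⟩ ⟨a', b'⟩
    simp only [Prod.mk.injEq]
    constructor
    · intro h
      have hb : b = b' := by tauto
      subst hb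
      tauto
    · rintro ⟨hb, h⟩
      subst hb
      tauto

end helpers

section msgs
variable {N Q : ℕ}

/-- The messages indexed by `S`. -/
def wS (S : Finset (Fin N)) (w : Fin N → Fin Q) : Fin N → Option (Fin Q) :=
  fun i => if i ∈ S then some (w i) else none

lemma wS_eq (S : Finset (Fin N)) (w w' : Fin N → Fin Q) :
    wS S w = wS S w' ↔ ∀ i ∈ S, w i = w' i := by
  unfold wS
  rw [funext_iff]
  refine forall_congr' fun i => ?_
  by_cases h : i ∈ S <;> simp [h]

/-- Uniform mass function on messages. -/
noncomputable def uu (N Q : ℕ) : (Fin N → Fin Q) → ℝ :=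
  fun _ => (1 : ℝ) / (Fintype.card (Fin N → Fin Q) : ℝ)

lemma uu_pos [NeZero Q] (w : Fin N → Fin Q) : 0 < uu N Q w := by
  unfold uu
  have : (0 : ℝ) < Fintype.card (Fin N → Fin Q) := by exact_mod_cast Fintype.card_pos
  positivity

lemma uu_sum [NeZero Q] : ∑ w, uu N Q w = 1 := by
  unfold uu
  have : (0 : ℝ) < Fintype.card (Fin N → Fin Q) := by exact_mod_cast Fintype.card_pos
  rw [Finset.sum_const, Finset.card_univ, nsmul_eq_mul]
  field_simp

lemma ent_wS [NeZero Q] (S : Finset (Fin N)) :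
    ent (uu N Q) (wS S) = S.card * Real.logb 2 Q := by
  have hQ : (0 : ℝ) < Q := by exact_mod_cast Nat.pos_of_ne_zero (NeZero.ne Q)
  have hpr : ∀ w, pr (uu N Q) (wS S) (wS S w) = ((Q : ℝ) ^ S.card)⁻¹ := by
    intro w
    unfold pr uu
    have : (Finset.univ.filter fun w' => wS S w' = wS S w) =
        Fintype.piFinset (fun i => if i ∈ S then {w i} else Finset.univ) := by
      ext w'
      simp only [Finset.mem_filter, Finset.mem_univ, true_and, wS_eq, Fintype.mem_piFinset]
      refine forall_congr' fun i => ?_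
      by_cases h : i ∈ S <;> simp [h]
    rw [this, Finset.sum_const, Fintype.card_piFinset]
    have h2 : ∀ i, (if i ∈ S then {w i} else (Finset.univ : Finset (Fin Q))).card =
        if i ∈ S then 1 else Q := by
      intro i
      by_cases h : i ∈ S <;> simp [h]
    simp_rw [h2]
    rw [Finset.prod_ite]
    simp only [Finset.prod_const_one, one_mul, Finset.prod_const, Fintype.card_fun, Fintype.card_fin,
      nsmul_eq_mul]
    have h3 : (Finset.univ.filter fun i => i ∉ S).card + S.card = N := by
      have := Finset.card_compl_add_card S
      rw [Fintype.card_fin] at this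
      refine Eq.trans ?_ this
      congr 2
      ext; simp
    have h4 : (Q : ℝ) ^ N = (Q : ℝ) ^ (Finset.univ.filter fun i => i ∉ S).card * (Q : ℝ) ^ S.card := by
      rw [← pow_add]
      exact congrArg _ h3.symm
    push_cast
    rw [h4]
    field_simp
  rw [hp_ent]
  simp_rw [hpr]
  rw [← Finset.sum_mul, uu_sum, Real.logb_inv, Real.logb_pow]
  ring

variable {ν : Type*} [Fintype ν] [DecidableEq ν]

/-- Information between the messages in `S` and `v`, up to a constant. -/
noncomputable def GG (v : (Fin N → Fin Q) → ν) (S : Finset (Fin N)) : ℝ :=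
  ent (uu N Q) (wS S) - ent (uu N Q) (fun w => (v w, wS S w))

lemma GG_super [NeZero Q] (v : (Fin N → Fin Q) → ν) (A B : Finset (Fin N)) (hAB : A ⊆ B) (i : Fin N)
    (hi : i ∉ B) : GG v (insert i A) - GG v A ≤ GG v (insert i B) - GG v B := by
  have h := hp_cmi_nonneg (uu N Q) uu_pos uu_sum (fun w => w i) (wS B) (fun w => (v w, wS A w))
  unfold cmi at h
  rw [hp_congr _ (fun w => (w i, v w, wS A w)) (fun w => (v w, wS (insert i A) w)),
    hp_congr _ (fun w => (wS B w, v w, wS A w)) (fun w => (v w, wS B w)),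
    hp_congr _ (fun w => (w i, wS B w, v w, wS A w)) (fun w => (v w, wS (insert i B) w))] at h
  · unfold GG
    simp only [ent_wS]
    rw [Finset.card_insert_of_notMem hi, Finset.card_insert_of_notMem (fun h => hi (hAB h))]
    push_cast
    linarith
  · intro a b
    simp only [Prod.mk.injEq, wS_eq, Finset.forall_mem_insert]
    constructor
    · tauto
    · rintro ⟨h1, h2, h3⟩
      exact ⟨h2, h3, h1, fun j hj => h3 j (hAB hj)⟩
  · intro a b
    simp only [Prod.mk.injEq, wS_eq]
    constructor
    · tauto
    · rintro ⟨h1, h3⟩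
      exact ⟨h3, h1, fun j hj => h3 j (hAB hj)⟩
  · intro a b
    simp only [Prod.mk.injEq, wS_eq, Finset.forall_mem_insert]
    tauto

/-- Initial segments. -/
def seg (N m : ℕ) : Finset (Fin N) := Finset.univ.filter fun i => (i : ℕ) < m

lemma GG_le [NeZero Q] (v : (Fin N → Fin Q) → ν) (S : Finset (Fin N)) :
    GG v S - GG v ∅ ≤ ∑ i ∈ S, (GG v (seg N (i + 1)) - GG v (seg N i)) := by
  induction S using Finset.induction_on_max with
  | empty => simp
  | insert a s h ih =>
    have ha : a ∉ s := fun h' => lt_irrefl _ (h a h')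
    rw [Finset.sum_insert ha]
    have hs : seg N (a + 1) = insert a (seg N a) := by
      ext j
      simp only [seg, Finset.mem_filter, Finset.mem_univ, true_and, Finset.mem_insert, Fin.ext_iff]
      omega
    have := GG_super v s (seg N a) (fun j hj => by simpa [seg] using h j hj) a (by simp [seg])
    rw [hs]
    linarith

lemma GG_total [NeZero Q] (v : (Fin N → Fin Q) → ν) :
    ∑ i : Fin N, (GG v (seg N (i + 1)) - GG v (seg N i)) = ent (uu N Q) v := by
  rw [Fin.sum_univ_eq_sum_range (fun i => GG v (seg N (i + 1)) - GG v (seg N i)) N,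
    Finset.sum_range_sub (fun i => GG v (seg N i))]
  have h1 : GG v (seg N N) = 0 := by
    unfold GG
    rw [hp_congr _ (fun w => (v w, wS (seg N N) w)) (wS (seg N N)), sub_self]
    intro a b
    simp only [Prod.mk.injEq, and_iff_right_iff_imp, wS_eq]
    intro h
    have : a = b := funext fun i => h i (by simp [seg])
    rw [this]
  have h2 : GG v (seg N 0) = - ent (uu N Q) v := by
    have : seg N 0 = ∅ := by simp [seg]
    unfold GG
    rw [this, ent_wS, hp_congr _ (fun w => (v w, wS ∅ w)) v]
    · simp
    · intro a b
      simp [wS_eq]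
  rw [h1, h2]
  ring

/-- Set of the first `m` demands. -/
def dS {K : ℕ} (d : Fin K → Fin N) (m : ℕ) : Finset (Fin N) := (seg K m).image d

lemma step_bound [NeZero Q] {K : ℕ} {ρ : Type*} [Fintype ρ] [DecidableEq ρ]
    (v : (Fin N → Fin Q) → ν) (r : (Fin N → Fin Q) → ρ) (hr : ∀ a b, v a = v b → r a = r b)
    (d : Fin K → Fin N) (k : Fin K) :
    cmi (uu N Q) (fun w => w (d k)) r
      (fun w => fun j : Fin K => if (j : ℕ) < (k : ℕ) then some (w (d j)) else none) ≤
      GG v (dS d (k + 1)) - GG v (dS d k) := by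
  set Z : (Fin N → Fin Q) → Fin K → Option (Fin Q) :=
    fun w => fun j : Fin K => if (j : ℕ) < (k : ℕ) then some (w (d j)) else none with hZ
  have hZ1 : ∀ a b, Z a = Z b ↔ ∀ i ∈ dS d k, a i = b i := by
    intro a b
    rw [hZ, funext_iff]
    simp only [dS, seg, Finset.mem_image, Finset.mem_filter, Finset.mem_univ, true_and,
      forall_exists_index, and_imp, forall_apply_eq_imp_iff₂]
    refine forall_congr' fun i => ?_
    by_cases h : (i : ℕ) < k <;> simp [h]
  have hs : dS d (k + 1) = insert (d k) (dS d k) := by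
    rw [dS, dS, ← Finset.image_insert]
    congr 1
    ext j
    simp only [seg, Finset.mem_filter, Finset.mem_univ, true_and, Finset.mem_insert, Fin.ext_iff]
    omega
  have h := hp_cmi_nonneg (uu N Q) uu_pos uu_sum (fun w => w (d k)) v (fun w => (r w, Z w))
  unfold cmi at h ⊢
  rw [hp_congr _ (fun w => (v w, r w, Z w)) (fun w => (v w, wS (dS d k) w)),
    hp_congr _ (fun w => (w (d k), v w, r w, Z w)) (fun w => (v w, wS (dS d (k + 1)) w))] at h
  · rw [hp_congr _ (fun w => (w (d k), Z w)) (wS (dS d (k + 1))), hp_congr _ Z (wS (dS d k))]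
    · unfold GG
      linarith
    · intro a b
      rw [hZ1, wS_eq]
    · intro a b
      rw [Prod.mk.injEq, hZ1, wS_eq, hs, Finset.forall_mem_insert]
  · intro a b
    have := hr a b
    simp only [Prod.mk.injEq, hZ1, wS_eq, hs, Finset.forall_mem_insert]
    tauto
  · intro a b
    have := hr a b
    simp only [Prod.mk.injEq, hZ1, wS_eq]
    tauto

lemma count_dS {K ℓ : ℕ} (hN : 0 < N) (hℓ : ℓ ≤ K) (i : Fin N) :
    1 / (Fintype.card (Fin K → Fin N) : ℝ) *
      ((Finset.univ.filter fun d : Fin K → Fin N => i ∈ dS d ℓ).card : ℝ) =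
      1 - (1 - 1 / (N : ℝ)) ^ ℓ := by
  have hN' : (0 : ℝ) < N := by exact_mod_cast hN
  have h1 : (Finset.univ.filter fun d : Fin K → Fin N => ¬ i ∈ dS d ℓ) =
      Fintype.piFinset (fun j : Fin K => if (j : ℕ) < ℓ then {i}ᶜ else Finset.univ) := by
    ext d
    simp only [Finset.mem_filter, Finset.mem_univ, true_and, Fintype.mem_piFinset, dS, seg,
      Finset.mem_image, not_exists, not_and]
    refine forall_congr' fun j => ?_
    by_cases h : (j : ℕ) < ℓ <;> simp [h]
  have h2 : ((Finset.univ.filter fun d : Fin K → Fin N => ¬ i ∈ dS d ℓ).card : ℝ) =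
      ((N : ℝ) - 1) ^ ℓ * (N : ℝ) ^ (K - ℓ) := by
    rw [h1, Fintype.card_piFinset]
    have : ∀ j : Fin K, (if (j : ℕ) < ℓ then ({i}ᶜ : Finset (Fin N)) else Finset.univ).card =
        if (j : ℕ) < ℓ then N - 1 else N := by
      intro j
      by_cases h : (j : ℕ) < ℓ <;> simp [h, Finset.card_compl]
    simp_rw [this]
    rw [Finset.prod_ite, Finset.prod_const, Finset.prod_const]
    have c1 : (Finset.univ.filter fun j : Fin K => (j : ℕ) < ℓ).card = ℓ := by
      rw [Fin.card_filter_val_lt]; omega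
    have c2 : (Finset.univ.filter fun j : Fin K => ¬ (j : ℕ) < ℓ).card = K - ℓ := by
      have := Finset.card_filter_add_card_filter_not (s := (Finset.univ : Finset (Fin K)))
        (fun j => (j : ℕ) < ℓ)
      rw [c1, Finset.card_univ, Fintype.card_fin] at this
      omega
    rw [c1, c2]
    push_cast [Nat.cast_sub (show 1 ≤ N from hN)]
    ring
  have h3 : ((Finset.univ.filter fun d : Fin K → Fin N => i ∈ dS d ℓ).card : ℝ) +
      ((Finset.univ.filter fun d : Fin K → Fin N => ¬ i ∈ dS d ℓ).card : ℝ) = (N : ℝ) ^ K := by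
    have := Finset.card_filter_add_card_filter_not (s := (Finset.univ : Finset (Fin K → Fin N)))
        (fun d => i ∈ dS d ℓ)
    rw [Finset.card_univ, Fintype.card_fun, Fintype.card_fin, Fintype.card_fin] at this
    exact_mod_cast this
  have h4 : (N : ℝ) ^ K = (N : ℝ) ^ ℓ * (N : ℝ) ^ (K - ℓ) := by
    rw [← pow_add]; congr 1; omega
  have h5 : (1 - 1 / (N : ℝ)) ^ ℓ = ((N : ℝ) - 1) ^ ℓ / (N : ℝ) ^ ℓ := by
    rw [← div_pow]; congr 1; field_simp
  rw [h5, Fintype.card_fun, Fintype.card_fin, Fintype.card_fin, Nat.cast_pow,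
    eq_sub_of_add_eq h3, h2, h4]
  field_simp

end msgs

/-- **Lemma 4, part (ii).** The sample space is
`Ω = (Fin N → Fin (2^F)) × (Fin K → Fin N)` with the uniform distribution, so the
messages `W = ω.1` are i.i.d. uniform and the demand vector `D = ω.2` is uniform
on `{1,…,N}^K` and independent of the messages. With caches
`V_k = g_k(W_1,…,W_N)` of size at most `⌊2^{F·M}⌋`, for every `ℓ ∈ {1,…,K}`:
`∑_{k=1}^{ℓ} β_k ≤ N·(1 − (1 − 1/N)^ℓ)·(ℓ·M/N)`, where
`β_k := (1/F)·I(W_{D_k}; V_1,…,V_k | W_{D_1},…,W_{D_{k−1}}, D)`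
(below `k : Fin ℓ` is 0-based). -/
theorem beta_bound_ii
    (N K F : ℕ) (hN : 0 < N) (hK : 0 < K) (hF : 0 < F)
    (M : ℝ) (hM : 0 ≤ M)
    (V : Fin K → Type) [∀ k, Fintype (V k)] [∀ k, DecidableEq (V k)]
    (hV : ∀ k, Fintype.card (V k) ≤ ⌊(2 : ℝ) ^ ((F : ℝ) * M)⌋₊)
    (g : ∀ k : Fin K, (Fin N → Fin (2 ^ F)) → V k)
    (ℓ : ℕ) (hℓ1 : 1 ≤ ℓ) (hℓ2 : ℓ ≤ K) :
    ∑ k : Fin ℓ, (1 / (F : ℝ)) *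
        cmi (fun _ : (Fin N → Fin (2 ^ F)) × (Fin K → Fin N) =>
              (1 : ℝ) / (Fintype.card ((Fin N → Fin (2 ^ F)) × (Fin K → Fin N)) : ℝ))
          (fun ω => ω.1 (ω.2 (Fin.castLE hℓ2 k)))
          (fun ω => fun i : Fin K =>
            if (i : ℕ) ≤ (k : ℕ) then some (g i ω.1) else none)
          (fun ω =>
            ((fun j : Fin K =>
                if (j : ℕ) < (k : ℕ) then some (ω.1 (ω.2 j)) else none), ω.2))
      ≤ (N : ℝ) * (1 - (1 - 1 / (N : ℝ)) ^ ℓ) * ((ℓ : ℝ) * M / (N : ℝ)) := by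
  have hF' : (0 : ℝ) < F := by exact_mod_cast hF
  have hN' : (0 : ℝ) < N := by exact_mod_cast hN
  haveI : NeZero N := ⟨hN.ne'⟩
  let v : (Fin N → Fin (2 ^ F)) → (∀ i : Fin K, Option (V i)) :=
    fun w i => if (i : ℕ) < ℓ then some (g i w) else none
  have hv : ∀ a b, v a = v b ↔ ∀ i : Fin K, (i : ℕ) < ℓ → g i a = g i b := by
    intro a b
    rw [funext_iff]
    refine forall_congr' fun i => ?_
    by_cases h : (i : ℕ) < ℓ <;> simp [v, h]
  have hent : ent (uu N (2 ^ F)) v ≤ (ℓ : ℝ) * (F * M) := by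
    have hc : (0 : ℝ) < ((2 : ℝ) ^ ((F : ℝ) * M)) ^ ℓ := by positivity
    have := hp_ent_le (uu N (2 ^ F)) uu_pos uu_sum v
      (Fintype.piFinset fun i : Fin K =>
        if (i : ℕ) < ℓ then (Finset.univ : Finset (V i)).map Function.Embedding.some else {none})
      (by
        intro w
        rw [Fintype.mem_piFinset]
        intro i
        by_cases h : (i : ℕ) < ℓ <;> simp [v, h])
      (((2 : ℝ) ^ ((F : ℝ) * M)) ^ ℓ)
      (by
        rw [Fintype.card_piFinset]
        push_cast
        calc _ ≤ ∏ i : Fin K, (if (i : ℕ) < ℓ then (2 : ℝ) ^ ((F : ℝ) * M) else 1) := by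
              refine Finset.prod_le_prod (fun i _ => by positivity) fun i _ => ?_
              by_cases h : (i : ℕ) < ℓ
              · simp only [h, if_true, Finset.card_map, Finset.card_univ]
                exact (Nat.le_floor_iff (by positivity)).1 (hV i)
              · simp [h]
          _ = _ := by
              rw [Finset.prod_ite, Finset.prod_const, Finset.prod_const_one, mul_one,
                Fin.card_filter_val_lt]
              congr 1
              omega)
      hc
    rwa [Real.logb_pow, Real.logb_rpow (by norm_num) (by norm_num)] at this
  let a : Fin N → ℝ := fun i => GG v (seg N (i + 1)) - GG v (seg N i)
  have hq : 0 ≤ 1 - (1 - 1 / (N : ℝ)) ^ ℓ := by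
    have : 1 / (N : ℝ) ≤ 1 := by
      rw [div_le_one hN']; exact_mod_cast hN
    have h2 : 0 ≤ 1 / (N : ℝ) := by positivity
    have := pow_le_one₀ (n := ℓ) (show 0 ≤ 1 - 1 / (N : ℝ) by linarith) (by linarith)
    linarith
  have hd : ∀ d : Fin K → Fin N, ∑ k : Fin ℓ, cmi (uu N (2 ^ F))
          (fun w => w (d (Fin.castLE hℓ2 k)))
          (fun w => fun i : Fin K =>
            if (i : ℕ) ≤ (k : ℕ) then some (g i w) else none)
          (fun w => (fun j : Fin K =>
                if (j : ℕ) < (k : ℕ) then some (w (d j)) else none)) ≤ ∑ i ∈ dS d ℓ, a i := by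
    intro d
    refine le_trans (Finset.sum_le_sum fun k _ => step_bound v _ ?_ d (Fin.castLE hℓ2 k)) ?_
    · intro x y hxy
      rw [hv] at hxy
      funext i
      by_cases h : (i : ℕ) ≤ k
      · simp [h, hxy i (lt_of_le_of_lt h k.2)]
      · simp [h]
    · simp only [Fin.val_castLE]
      rw [Fin.sum_univ_eq_sum_range (fun k => GG v (dS d (k + 1)) - GG v (dS d k)) ℓ,
        Finset.sum_range_sub (fun k => GG v (dS d k))]
      have : dS d 0 = ∅ := by simp [dS, seg]
      rw [this]
      exact GG_le v _
  have hmain : ∀ k : Fin ℓ, _ = _ := fun k => hp_cmi_prod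
          (fun ω : (Fin N → Fin (2 ^ F)) × (Fin K → Fin N) => ω.1 (ω.2 (Fin.castLE hℓ2 k)))
          (fun ω => fun i : Fin K =>
            if (i : ℕ) ≤ (k : ℕ) then some (g i ω.1) else none)
          (fun ω => (fun j : Fin K =>
                if (j : ℕ) < (k : ℕ) then some (ω.1 (ω.2 j)) else none))
  rw [← Finset.mul_sum, Finset.sum_congr rfl fun k _ => hmain k, ← Finset.mul_sum, Finset.sum_comm]
  have hsum : 1 / (Fintype.card (Fin K → Fin N) : ℝ) * ∑ d : Fin K → Fin N, ∑ i ∈ dS d ℓ, a i =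
      (1 - (1 - 1 / (N : ℝ)) ^ ℓ) * ent (uu N (2 ^ F)) v := by
    rw [← GG_total v, Finset.mul_sum]
    have : ∀ d : Fin K → Fin N, ∑ i ∈ dS d ℓ, a i = ∑ i, if i ∈ dS d ℓ then a i else 0 := by
      intro d
      simp
    simp_rw [this]
    rw [← Finset.mul_sum, Finset.sum_comm, Finset.mul_sum, Finset.mul_sum]
    refine Finset.sum_congr rfl fun i _ => ?_
    rw [← count_dS hN hℓ2 i, ← Finset.sum_filter, Finset.sum_const, nsmul_eq_mul, mul_assoc]
  have hfin : 1 / (Fintype.card (Fin K → Fin N) : ℝ) * ∑ d : Fin K → Fin N, _ ≤ _ :=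
    mul_le_mul_of_nonneg_left (Finset.sum_le_sum fun d _ => hd d) (by positivity)
  rw [hsum] at hfin
  have h6 := hfin.trans (mul_le_mul_of_nonneg_left hent hq)
  refine (mul_le_mul_of_nonneg_left h6 (by positivity)).trans (le_of_eq ?_)
  field_simp
end

section
/- Theorem 4 (average-case gap bound): Let K and N be positive integers, set N̄ := min(K,N), and let M ∈ [0, N). Define R_YMA(K,N,M) := N̄ if M = 0 and R_YMA(K,N,M) := ((N−M)/M)·(1 − (1 − M/N)^N̄) if M ∈ (0,N); define R^low_avg(K,N,M) := max over ℓ ∈ {1,…,K} of max{ (1 − (1 − 1/N)^ℓ)·(N − ℓM) , (1 − (1 − 1/N)^ℓ)·N − (ℓ(ℓ+1)/(2N))·M }. Then for every real number C such that η(u,v) ≤ C for all u ∈ (0,1] and all v ∈ (0,1/2], it holds that R_YMA(K,N,M) ≤ C·R^low_avg(K,N,M). (Since the average-case rate-memory tradeoff R*_avg(M) satisfies R^low_avg(K,N,M) ≤ R*_avg(M) ≤ R_YMA(K,N,M), this gives R*_avg(M)/R^low_avg(K,N,M) ≤ sup_{u∈(0,1]} sup_{v∈(0,1/2]} η(u,v).)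 -/
/-- The function `η(u,v)` from Theorem 4 of the paper. -/
noncomputable def eta (u v : ℝ) : ℝ :=
  ((u + v - v * (1 - v) ^ (u / v)) *
      (1 - (1 - v / (u + v) * (1 - v) ^ (u / v)) ^ (1 / v))) /
    ((1 - v) ^ (u / v) * (1 - (1 + u / 2) * (1 - v) ^ (u / v)))

/-- The Yu–Maddah-Ali–Avestimehr achievable rate for decentralized coded caching
with `K` users, `N` files and cache size `M`. -/
noncomputable def RYMA (K N : ℕ) (M : ℝ) : ℝ :=
  if M = 0 then (min K N : ℝ)
  else ((N : ℝ) - M) / M * (1 - (1 - M / (N : ℝ)) ^ min K N)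


/-- Sum form of the YMA rate. -/
noncomputable def fY (N n : ℕ) (M : ℝ) : ℝ := ∑ i ∈ Finset.range n, (1 - M / (N : ℝ)) ^ (i + 1)

/-- The second family of lower-bound lines. -/
noncomputable def gL (N l : ℕ) (M : ℝ) : ℝ :=
  (1 - (1 - 1 / (N : ℝ)) ^ l) * (N : ℝ) - (l : ℝ) * ((l : ℝ) + 1) / (2 * (N : ℝ)) * M

/-- The corner points. -/
noncomputable def cP (N l : ℕ) : ℝ := (N : ℝ) * (1 - 1 / (N : ℝ)) ^ l / ((l : ℝ) + 1)

lemma geom_aux (x : ℝ) (n : ℕ) :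
    (1 - x) * ∑ i ∈ Finset.range n, x ^ (i + 1) = x * (1 - x ^ n) := by
  induction n with
  | zero => simp
  | succ k ih => rw [Finset.sum_range_succ, mul_add, ih]; ring

lemma fY_eq (N n : ℕ) (hN : 0 < N) (M : ℝ) (hM : M ≠ 0) :
    ((N : ℝ) - M) / M * (1 - (1 - M / (N : ℝ)) ^ n) = fY N n M := by
  have hN' : (N : ℝ) ≠ 0 := by positivity
  have h := geom_aux (1 - M / N) n
  have h2 : (1 - (1 - M / (N : ℝ))) = M / N := by ring
  rw [h2] at h
  unfold fY
  have h3 : ((N : ℝ) - M) / M = (1 - M / N) * (N / M) := by field_simp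
  rw [h3, mul_right_comm, ← h]
  field_simp

lemma RYMA_eq (K N : ℕ) (hN : 0 < N) (M : ℝ) : RYMA K N M = fY N (min K N) M := by
  unfold RYMA
  split_ifs with h
  · subst h; simp [fY]
  · exact fY_eq N _ hN M h

lemma fY_mono (N n m : ℕ) (h : n ≤ m) (M : ℝ) (h1 : 0 ≤ 1 - M / (N : ℝ)) :
    fY N n M ≤ fY N m M := by
  unfold fY
  apply Finset.sum_le_sum_of_subset_of_nonneg (Finset.range_mono h)
  intros; positivity

lemma fY_convex (N n : ℕ) (hN : 0 < N) : ConvexOn ℝ (Set.Icc 0 (N : ℝ)) (fY N n) := by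
  have hN' : (0 : ℝ) < N := by positivity
  refine ⟨convex_Icc _ _, ?_⟩
  intro x hx y hy a b ha hb hab
  unfold fY
  simp only [smul_eq_mul, Finset.mul_sum]
  rw [← Finset.sum_add_distrib]
  apply Finset.sum_le_sum
  intro i _
  have hx' : 0 ≤ 1 - x / (N : ℝ) := by rw [sub_nonneg, div_le_one hN']; exact hx.2
  have hy' : 0 ≤ 1 - y / (N : ℝ) := by rw [sub_nonneg, div_le_one hN']; exact hy.2
  have := (convexOn_pow (𝕜 := ℝ) (i + 1)).2 (Set.mem_Ici.2 hx') (Set.mem_Ici.2 hy') ha hb hab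
  simp only [smul_eq_mul] at this
  have e : 1 - (a * x + b * y) / (N : ℝ) = a * (1 - x / N) + b * (1 - y / N) := by
    have : b = 1 - a := by linarith
    subst this; ring
  rw [e]; exact this

lemma interp (f : ℝ → ℝ) (s : Set ℝ) (hf : ConvexOn ℝ s f) (p r a b x : ℝ)
    (ha : a ∈ s) (hb : b ∈ s) (hax : a ≤ x) (hxb : x ≤ b)
    (h1 : f a ≤ p + r * a) (h2 : f b ≤ p + r * b) : f x ≤ p + r * x := by
  rcases eq_or_lt_of_le (hax.trans hxb) with h | h
  · have : x = a := by linarith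
    rw [this]; exact h1
  · have hd : 0 < b - a := by linarith
    have hf2 := hf.2
    have := @hf2 a ha b hb ((b - x) / (b - a)) ((x - a) / (b - a))
      (div_nonneg (by linarith) hd.le) (div_nonneg (by linarith) hd.le) (by field_simp; ring)
    simp only [smul_eq_mul] at this
    have e : (b - x) / (b - a) * a + (x - a) / (b - a) * b = x := by field_simp; ring
    rw [e] at this
    have k1 := mul_le_mul_of_nonneg_left h1 (div_nonneg (by linarith : 0 ≤ b - x) hd.le)
    have k2 := mul_le_mul_of_nonneg_left h2 (div_nonneg (by linarith : 0 ≤ x - a) hd.le)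
    have e2 : (b - x) / (b - a) * (p + r * a) + (x - a) / (b - a) * (p + r * b) = p + r * x := by
      field_simp; ring
    linarith

lemma q_bound (N l : ℕ) (hN : 1 ≤ N) :
    (1 - 1 / (N : ℝ)) ^ l * (1 + (l : ℝ) / N) ≤ 1 := by
  have hN' : (1 : ℝ) ≤ N := by exact_mod_cast hN
  have hi : 1 / (N : ℝ) ≤ 1 := by rw [div_le_one (by linarith)]; exact hN'
  have hi0 : 0 < 1 / (N : ℝ) := by positivity
  have b := one_add_mul_le_pow (a := 1 / (N : ℝ)) (by linarith) l
  have q0 : 0 ≤ 1 - 1 / (N : ℝ) := by linarith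
  calc (1 - 1 / (N : ℝ)) ^ l * (1 + (l : ℝ) / N)
      ≤ (1 - 1 / (N : ℝ)) ^ l * (1 + 1 / (N : ℝ)) ^ l := by
        apply mul_le_mul_of_nonneg_left _ (by positivity)
        calc 1 + (l : ℝ) / N = 1 + l * (1 / (N : ℝ)) := by ring
          _ ≤ _ := b
    _ = ((1 - 1 / (N : ℝ)) * (1 + 1 / (N : ℝ))) ^ l := by rw [mul_pow]
    _ ≤ 1 := by apply pow_le_one₀ <;> nlinarith

lemma cP_mem (N l : ℕ) (hN : 1 ≤ N) : cP N l ∈ Set.Icc 0 (N : ℝ) := by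
  have hN' : (1 : ℝ) ≤ N := by exact_mod_cast hN
  have hi : 1 / (N : ℝ) ≤ 1 := by rw [div_le_one (by linarith)]; exact hN'
  have hi0 : 0 < 1 / (N : ℝ) := by positivity
  have q0 : 0 ≤ 1 - 1 / (N : ℝ) := by linarith
  have q1 : (1 - 1 / (N : ℝ)) ^ l ≤ 1 := pow_le_one₀ q0 (by linarith)
  have q2 : 0 ≤ (1 - 1 / (N : ℝ)) ^ l := by positivity
  unfold cP
  constructor
  · positivity
  · rw [div_le_iff₀ (by positivity)]
    have : (0 : ℝ) ≤ l := by positivity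
    nlinarith

lemma gL_cP (N l : ℕ) (hN : 1 ≤ N) : gL N (l + 1) (cP N l) = gL N l (cP N l) := by
  have hN' : (N : ℝ) ≠ 0 := by positivity
  have hl : (l : ℝ) + 1 ≠ 0 := by positivity
  unfold gL cP
  push_cast
  rw [pow_succ]
  generalize (1 - 1 / (N : ℝ)) ^ l = Q
  field_simp
  ring

lemma gL_cP_val (N l : ℕ) (hN : 1 ≤ N) : gL N l (cP N l) =
    N * (1 - (1 + (l : ℝ) / N / 2) * (1 - 1 / (N : ℝ)) ^ l) := by
  have hN' : (N : ℝ) ≠ 0 := by positivity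
  have hl : (l : ℝ) + 1 ≠ 0 := by positivity
  unfold gL cP
  generalize (1 - 1 / (N : ℝ)) ^ l = Q
  field_simp
  ring

lemma corner (N l : ℕ) (hN : 2 ≤ N) (hl : 1 ≤ l) (hlN : l ≤ N) (C : ℝ)
    (hC : ∀ u ∈ Set.Ioc (0 : ℝ) 1, ∀ v ∈ Set.Ioc (0 : ℝ) (1 / 2), eta u v ≤ C) :
    fY N N (cP N l) ≤ C * gL N l (cP N l) := by
  have hN' : (2 : ℝ) ≤ N := by exact_mod_cast hN
  have hl' : (1 : ℝ) ≤ l := by exact_mod_cast hl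
  have hlN' : (l : ℝ) ≤ N := by exact_mod_cast hlN
  have hNp : (0 : ℝ) < N := by linarith
  have hlp : (0 : ℝ) < l := by linarith
  have hh : 1 / (N : ℝ) ≤ 1 / 2 := one_div_le_one_div_of_le (by norm_num) hN'
  have h := hC ((l : ℝ) / N) ⟨by positivity, by rw [div_le_one hNp]; exact hlN'⟩ (1 / (N : ℝ))
    ⟨by positivity, hh⟩
  have q0 : 0 < 1 - 1 / (N : ℝ) := by linarith
  have hQ : 0 < (1 - 1 / (N : ℝ)) ^ l := by positivity
  have hc : cP N l ≠ 0 := by unfold cP; positivity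
  have hb := q_bound N l (by omega)
  have hu : 0 < (l : ℝ) / N := by positivity
  have hpos : 0 < 1 - (1 + (l : ℝ) / N / 2) * (1 - 1 / (N : ℝ)) ^ l := by nlinarith
  unfold eta at h
  have e1 : (l : ℝ) / N / (1 / (N : ℝ)) = (l : ℝ) := by field_simp
  have e2 : 1 / (1 / (N : ℝ)) = (N : ℝ) := by field_simp
  have e3 : 1 / (N : ℝ) / ((l : ℝ) / N + 1 / N) = 1 / ((l : ℝ) + 1) := by field_simp
  rw [e1, e2, e3, Real.rpow_natCast, Real.rpow_natCast, div_le_iff₀ (by positivity)] at h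
  rw [gL_cP_val N l (by omega), ← fY_eq N N (by omega) _ hc]
  have e4 : cP N l / N = 1 / ((l : ℝ) + 1) * (1 - 1 / (N : ℝ)) ^ l := by
    unfold cP; field_simp
  have e5 : ((N : ℝ) - cP N l) / cP N l = N * ((l : ℝ) / N + 1 / N - 1 / N * (1 - 1 / (N : ℝ)) ^ l) /
      (1 - 1 / (N : ℝ)) ^ l := by
    unfold cP
    generalize (1 - 1 / (N : ℝ)) ^ l = Q at *
    have : Q ≠ 0 := hQ.ne'
    field_simp
  rw [e4, e5, div_mul_eq_mul_div, div_le_iff₀ hQ]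
  have := mul_le_mul_of_nonneg_left h hNp.le
  linarith

lemma C_ge_two (C : ℝ)
    (hC : ∀ u ∈ Set.Ioc (0 : ℝ) 1, ∀ v ∈ Set.Ioc (0 : ℝ) (1 / 2), eta u v ≤ C) : 2 ≤ C := by
  have h := hC (1 / 3) (by norm_num) (1 / 3) (by norm_num)
  unfold eta at h
  have e2 : (1 : ℝ) / (1 / 3) = ((3 : ℕ) : ℝ) := by norm_num
  have e1 : (1 : ℝ) / 3 / (1 / 3) = 1 := by norm_num
  rw [e1, e2, Real.rpow_natCast, Real.rpow_one] at h
  norm_num at h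
  linarith

lemma gL_affine (N l : ℕ) (C M : ℝ) : C * gL N l M = C * ((1 - (1 - 1 / (N : ℝ)) ^ l) * (N : ℝ)) +
    (-(C * ((l : ℝ) * ((l : ℝ) + 1) / (2 * (N : ℝ))))) * M := by unfold gL; ring

lemma main_aux (N n : ℕ) (hN : 2 ≤ N) (hn : n ≤ N) (C M : ℝ)
    (hC : ∀ u ∈ Set.Ioc (0 : ℝ) 1, ∀ v ∈ Set.Ioc (0 : ℝ) (1 / 2), eta u v ≤ C)
    (hMN : M ≤ N) (l : ℕ) (hl : 1 ≤ l) (hln : l ≤ n) (hM : cP N l ≤ M) :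
    ∃ j, 1 ≤ j ∧ j ≤ l ∧ fY N n M ≤ C * gL N j M := by
  have hNp : (0 : ℝ) < N := by positivity
  have cor : ∀ l, 1 ≤ l → l ≤ n → fY N n (cP N l) ≤ C * gL N l (cP N l) := by
    intro l h1 h2
    refine (fY_mono N n N hn _ ?_).trans (corner N l hN h1 (by omega) C hC)
    rw [sub_nonneg, div_le_one hNp]; exact (cP_mem N l (by omega)).2
  have step : ∀ k, k + 1 ≤ n → cP N (k + 1) ≤ M → M ≤ cP N k →
      fY N n M ≤ C * gL N (k + 1) M := by
    intro k hk h1 h2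
    rw [gL_affine]
    refine interp _ _ (fY_convex N n (by omega)) _ _ (cP N (k + 1)) (cP N k) M
      (cP_mem _ _ (by omega)) (cP_mem _ _ (by omega)) h1 h2 ?_ ?_
    · rw [← gL_affine]; exact cor _ (by omega) hk
    · rw [← gL_affine, gL_cP N k (by omega)]
      rcases Nat.eq_zero_or_pos k with h | h
      · subst h; simp [fY, gL, cP, hNp.ne']
      · exact cor k h (by omega)
  induction l, hl using Nat.le_induction with
  | base => exact ⟨1, le_rfl, le_rfl, step 0 hln hM (by simpa [cP] using hMN)⟩
  | succ k hk ih =>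
    rcases le_total (cP N k) M with h | h
    · obtain ⟨j, h1, h2, h3⟩ := ih (by omega) h
      exact ⟨j, h1, by omega, h3⟩
    · exact ⟨k + 1, by omega, le_rfl, step k hln hM h⟩

lemma main_ex (N n : ℕ) (hN : 2 ≤ N) (hn1 : 1 ≤ n) (hn : n ≤ N) (C M : ℝ)
    (hC : ∀ u ∈ Set.Ioc (0 : ℝ) 1, ∀ v ∈ Set.Ioc (0 : ℝ) (1 / 2), eta u v ≤ C)
    (hM0 : 0 ≤ M) (hMN : M ≤ N) :
    ∃ j, 1 ≤ j ∧ j ≤ n ∧ fY N n M ≤ C * gL N j M := by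
  have hNp : (0 : ℝ) < N := by positivity
  rcases le_total (cP N n) M with h | h
  · exact main_aux N n hN hn C M hC hMN n hn1 le_rfl h
  · refine ⟨n, hn1, le_rfl, ?_⟩
    rw [gL_affine]
    refine interp _ _ (fY_convex N n (by omega)) _ _ 0 (cP N n) M
      ⟨le_rfl, hNp.le⟩ (cP_mem _ _ (by omega)) hM0 h ?_ ?_
    · have hC2 := C_ge_two C hC
      have hb := q_bound N n (by omega)
      have hu1 : (n : ℝ) / N ≤ 1 := by
        rw [div_le_one hNp]; exact_mod_cast hn
      have hu0 : 0 ≤ (n : ℝ) / N := by positivity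
      have hf : fY N n 0 = (n : ℝ) / N * N := by simp [fY, hNp.ne']
      rw [hf, mul_zero, add_zero, ← mul_assoc]
      apply mul_le_mul_of_nonneg_right _ hNp.le
      generalize (1 - 1 / (N : ℝ)) ^ n = Q at *
      generalize (n : ℝ) / N = u at *
      have hQ : u / 2 ≤ 1 - Q := by
        by_contra hcon
        push Not at hcon
        nlinarith
      nlinarith
    · rw [← gL_affine]
      refine (fY_mono N n N hn _ ?_).trans (corner N n hN hn1 hn C hC)
      rw [sub_nonneg, div_le_one hNp]; exact (cP_mem N n (by omega)).2

/-- **Theorem 4 (average-case gap bound).** For all `K, N ≥ 1` and `M ∈ [0,N)`,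
and any constant `C` dominating `η(u,v)` for all `u ∈ (0,1]` and `v ∈ (0,1/2]`,
the YMA achievable rate is at most `C` times the lower bound
`R^low_avg(K,N,M) = max_{ℓ ∈ {1,…,K}} max{(1 − (1−1/N)^ℓ)(N − ℓM),
(1 − (1−1/N)^ℓ)N − (ℓ(ℓ+1)/(2N))M}`. -/
theorem average_case_gap (K N : ℕ) (hK : 0 < K) (hN : 0 < N)
    (M : ℝ) (hM0 : 0 ≤ M) (hMN : M < N)
    (C : ℝ)
    (hC : ∀ u ∈ Set.Ioc (0 : ℝ) 1, ∀ v ∈ Set.Ioc (0 : ℝ) (1 / 2), eta u v ≤ C) :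
    RYMA K N M ≤
      C * (Finset.Icc 1 K).sup'
        (Finset.nonempty_Icc.mpr (by omega))
        (fun ℓ => max ((1 - (1 - 1 / (N : ℝ)) ^ ℓ) * ((N : ℝ) - (ℓ : ℝ) * M))
          ((1 - (1 - 1 / (N : ℝ)) ^ ℓ) * (N : ℝ)
            - (ℓ : ℝ) * ((ℓ : ℝ) + 1) / (2 * (N : ℝ)) * M)) := by
  have hC2 := C_ge_two C hC
  have key : ∃ j, 1 ≤ j ∧ j ≤ K ∧ fY N (min K N) M ≤ C * gL N j M := by
    rcases Nat.lt_or_ge N 2 with h | h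
    · have : N = 1 := by omega
      subst this
      have hm : min K 1 = 1 := by omega
      refine ⟨1, le_rfl, hK, ?_⟩
      rw [hm]
      norm_num at hMN
      simp only [fY, gL]
      norm_num
      nlinarith
    · obtain ⟨j, h1, h2, h3⟩ := main_ex N (min K N) h (by omega) (by omega) C M hC hM0 hMN.le
      exact ⟨j, h1, by omega, h3⟩
  obtain ⟨j, h1, h2, h3⟩ := key
  rw [RYMA_eq K N hN M]
  refine h3.trans (mul_le_mul_of_nonneg_left ?_ (by linarith))
  have hj : j ∈ Finset.Icc 1 K := Finset.mem_Icc.2 ⟨h1, h2⟩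
  exact (le_max_right _ _).trans (Finset.le_sup' (fun ℓ : ℕ => max ((1 - (1 - 1 / (N : ℝ)) ^ ℓ) * ((N : ℝ) - (ℓ : ℝ) * M))
          ((1 - (1 - 1 / (N : ℝ)) ^ ℓ) * (N : ℝ)
            - (ℓ : ℝ) * ((ℓ : ℝ) + 1) / (2 * (N : ℝ)) * M)) hj)
end
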